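/- Let a, P1, P2, C21 be real numbers with P1 ≥ 1, P2 ≥ 0, C21 ≥ 0 and P2 + 1 ≤ a^2. Then min{ C((P1−1)/4) + C(P2) + C21 , C(a^2*P1 + P2) − 1/2 } ≤ C((P1−1)/2) + min{ C( a^2 / (P2+1) ), C21 } + C(P2). -/

import Mathlib

/-- Gaussian capacity function: C(x) = (1/2) * log₂(1 + x). -/
noncomputable def C (x : ℝ) : ℝ := (1/2) * Real.logb 2 (1 + x)

/-!
Subtracting `1 / 2` from `C x` halves the factor `1 + x`, and decoding a signal of power `g` over
interference of power `p`, then the interference, costs nothing: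
`C p + C (g / (p + 1)) = C (p + g)`.
Hence if the inner minimum is `C (a² / (P2 + 1))`, the right-hand side is
`C P1 + C (P2 + a²) - 1 / 2`, which dominates the received-power bound because
`1 + P2 + a² P1 ≤ (1 + P1) (1 + P2 + a²)`. If it is `C21`, monotonicity of `C` suffices.
-/

theorem C_le_C {x y : ℝ} (hx : -1 < x) (hxy : x ≤ y) : C x ≤ C y := by
  have hlog : Real.logb 2 (1 + x) ≤ Real.logb 2 (1 + y) :=
    Real.logb_le_logb_of_le one_lt_two (by linarith) (by linarith)
  exact mul_le_mul_of_nonneg_left hlog one_half_pos.le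

theorem C_one : C 1 = 1 / 2 := by
  rw [C, one_add_one_eq_two, Real.logb_self_eq_one one_lt_two, mul_one]

theorem C_add_C {x y : ℝ} (hx : x ≠ -1) (hy : y ≠ -1) : C x + C y = C (x + y + x * y) := by
  have hx' : 1 + x ≠ 0 := fun h ↦ hx (by linarith)
  have hy' : 1 + y ≠ 0 := fun h ↦ hy (by linarith)
  rw [C, C, C, ← mul_add, ← Real.logb_mul hx' hy']
  ring_nf

theorem C_add_C_div {p g : ℝ} (hp : p ≠ -1) (hpg : p + g ≠ -1) :
    C p + C (g / (p + 1)) = C (p + g) := by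
  have hp' : p + 1 ≠ 0 := fun h ↦ hp (by linarith)
  have hg : g / (p + 1) ≠ -1 := by
    rw [Ne, div_eq_iff hp']
    exact fun h ↦ hpg (by linarith)
  rw [C_add_C hp hg]
  congr 1
  field_simp
  ring

theorem C_sub_half {x : ℝ} (hx : x ≠ -1) : C x - 1 / 2 = C ((x - 1) / 2) := by
  have hsplit := C_add_C_div (p := 1) (g := x - 1) (by norm_num) (by rwa [add_sub_cancel])
  rw [one_add_one_eq_two, add_sub_cancel, C_one] at hsplit
  linarith

theorem C_mul_add_le {g p q : ℝ} (hg : 0 ≤ g) (hp : 0 ≤ p) (hq : -1 < q) :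
    C (g * p + q) ≤ C p + C (q + g) := by
  have hgp : 0 ≤ g * p := mul_nonneg hg hp
  have hpq : 0 ≤ p * (1 + q) := mul_nonneg hp (by linarith)
  rw [C_add_C (by linarith) (by linarith)]
  exact C_le_C (by linarith) (by linarith)

theorem C_mul_add_sub_half_le {g p q : ℝ} (hg : 0 ≤ g) (hp : 0 ≤ p) (hq : -1 < q) :
    C (g * p + q) - 1 / 2 ≤ C ((p - 1) / 2) + C (g / (q + 1)) + C q :=
  calc C (g * p + q) - 1 / 2
    _ ≤ C p + C (q + g) - 1 / 2 := sub_le_sub_right (C_mul_add_le hg hp hq) _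
    _ = (C p - 1 / 2) + (C q + C (g / (q + 1))) := by
      rw [C_add_C_div hq.ne' (by linarith), sub_add_eq_add_sub]
    _ = C ((p - 1) / 2) + C (g / (q + 1)) + C q := by
      rw [C_sub_half (by linarith)]
      ring

theorem stmt_11_general (a P1 P2 C21 : ℝ) (hP1 : 1 ≤ P1) (hP2 : -1 < P2) :
    min (C ((P1 - 1) / 4) + C P2 + C21) (C (a ^ 2 * P1 + P2) - 1 / 2) ≤
      C ((P1 - 1) / 2) + min (C (a ^ 2 / (P2 + 1))) C21 + C P2 := by
  have hpower : C (a ^ 2 * P1 + P2) - 1 / 2 ≤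
      C ((P1 - 1) / 2) + C (a ^ 2 / (P2 + 1)) + C P2 :=
    C_mul_add_sub_half_le (sq_nonneg a) (by linarith) hP2
  have hquarter : C ((P1 - 1) / 4) ≤ C ((P1 - 1) / 2) := C_le_C (by linarith) (by linarith)
  have hlink : C ((P1 - 1) / 4) + C P2 + C21 ≤ C ((P1 - 1) / 2) + C21 + C P2 := by linarith
  rw [← min_add_add_left, ← min_add_add_right, min_comm]
  exact min_le_min hpower hlink

theorem stmt_11 (a P1 P2 C21 : ℝ) (hP1 : 1 ≤ P1) (hP2 : 0 ≤ P2) (hC21 : 0 ≤ C21)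
    (h : P2 + 1 ≤ a ^ 2) :
    min (C ((P1 - 1) / 4) + C P2 + C21) (C (a ^ 2 * P1 + P2) - 1 / 2) ≤
      C ((P1 - 1) / 2) + min (C (a ^ 2 / (P2 + 1))) C21 + C P2 :=
  stmt_11_general a P1 P2 C21 hP1 (by linarith)
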